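/- arXiv:2103.15505 — 5 statements merged into one kernel-verified Lean document; each statement's English description precedes it below -/
import Mathlib

section
/- The action of Thompson's group V on the language L is veelike: for every f ∈ V there exist n ∈ ℕ and a function F from binary words of length n to finite binary words such that for every binary word u of length n and every binary word v with u ++ v ∈ L, one has f · (u ++ v) = F(u) ++ v. -/
/-- Cantor space: sequences of binary digits (`false` = 0, `true` = 1). -/
abbrev C : Type := ℕ → Bool

/-- `wordApp u x` is the element of Cantor space beginning with the finite word `u`
and continuing with `x`. -/
def wordApp (u : List Bool) (x : C) : C := fun i => u.getD i (x (i - u.length))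

/-- The language `L`: finite binary words that are empty or end in the digit 1. -/
def InL (w : List Bool) : Prop := w = [] ∨ ∃ v : List Bool, w = v ++ [true]

/-- `X₀`: the set of finitely supported sequences. -/
def X0 : Set C := {x | {i : ℕ | x i = true}.Finite}

/-- `φ(w) = w ++ 0^∞`. -/
def phi (w : List Bool) : C := wordApp w (fun _ => false)

/-- Membership in Thompson's group `V`: a self-homeomorphism of Cantor space
admitting a prefix local rule. -/
def IsVElem (f : C ≃ₜ C) : Prop :=
  ∃ (n : ℕ) (F : List Bool → List Bool),
    ∀ u : List Bool, u.length = n → ∀ x : C, f (wordApp u x) = wordApp (F u) x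

/-!
Suppose `f` replaces prefixes of length `n` according to `F`. Splitting off one further digit,
`f` also replaces prefixes of length `n + 1`, by `a ++ [d] ↦ F a ++ [d]`. With this rule the digit
`d` survives, so the words `a ++ d :: v` and `F a ++ d :: v` have the same last digit, and the
new word lies in `L` because the old one does. The original rule can fail here: for `v = []` it may
turn a word ending in 1 into one ending in 0.
-/

theorem wordApp_append (u v : List Bool) (x : C) :
    wordApp (u ++ v) x = wordApp u (wordApp v x) := by
  funext i
  rcases lt_or_ge i u.length with hi | hi
  · simp only [wordApp, List.getD_append _ _ _ _ hi, List.getD_eq_getElem _ _ hi]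
  · simp only [wordApp, List.getD_append_right _ _ _ _ hi, List.getD_eq_default _ _ hi,
      List.length_append, Nat.sub_add_eq]

theorem phi_append (u v : List Bool) : phi (u ++ v) = wordApp u (phi v) :=
  wordApp_append u v _

theorem inL_iff_getLast? {w : List Bool} : InL w ↔ w = [] ∨ w.getLast? = some true := by
  rw [InL, List.getLast?_eq_some_iff]

theorem inL_append_iff_of_ne_nil {u v : List Bool} (hv : v ≠ []) : InL (u ++ v) ↔ InL v := by
  simp only [inL_iff_getLast?, List.getLast?_append_of_ne_nil u hv, List.append_eq_nil_iff, hv,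
    and_false]

/-- `IsPrefixRule f n F` says that `f` acts on Cantor space by replacing each prefix `u` of
length `n` with `F u`. `F` is unconstrained on words of other lengths. -/
def IsPrefixRule (f : C → C) (n : ℕ) (F : List Bool → List Bool) : Prop :=
  ∀ u : List Bool, u.length = n → ∀ x : C, f (wordApp u x) = wordApp (F u) x

/-- The refinement to longer words of a prefix rule `F` on words of length `n`: apply `F` to the
first `n` digits and leave the others in place. -/
def extendRule (n : ℕ) (F : List Bool → List Bool) (u : List Bool) : List Bool :=
  F (u.take n) ++ u.drop n

theorem inL_extendRule_append {n : ℕ} (F : List Bool → List Bool) {u v : List Bool}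
    (hu : n < u.length) (huv : InL (u ++ v)) : InL (extendRule n F u ++ v) := by
  have htail : u.drop n ++ v ≠ [] :=
    List.append_ne_nil_of_left_ne_nil (List.drop_eq_nil_iff.not.2 hu.not_ge) v
  rw [← List.take_append_drop n u, List.append_assoc, inL_append_iff_of_ne_nil htail] at huv
  rwa [extendRule, List.append_assoc, inL_append_iff_of_ne_nil htail]

namespace IsPrefixRule

variable {f : C → C} {n : ℕ} {F : List Bool → List Bool}

theorem extend (hF : IsPrefixRule f n F) (k : ℕ) :
    IsPrefixRule f (n + k) (extendRule n F) := by
  intro u hu x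
  have htake : (u.take n).length = n := List.length_take_of_le (by lia)
  calc f (wordApp u x)
      = f (wordApp (u.take n) (wordApp (u.drop n) x)) := by
        rw [← wordApp_append, List.take_append_drop]
    _ = wordApp (F (u.take n)) (wordApp (u.drop n) x) := hF _ htake _
    _ = wordApp (extendRule n F u) x := (wordApp_append _ _ _).symm

theorem apply_phi_append (hF : IsPrefixRule f n F) {u : List Bool} (hu : u.length = n)
    (v : List Bool) : f (phi (u ++ v)) = phi (F u ++ v) := by
  rw [phi_append, hF u hu, phi_append]

end IsPrefixRule

theorem V_action_veelike_general {f : C → C} (hf : ∃ n F, IsPrefixRule f n F) :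
    ∃ (n : ℕ) (F : List Bool → List Bool),
      ∀ u : List Bool, u.length = n → ∀ v : List Bool, InL (u ++ v) →
        InL (F u ++ v) ∧ f (phi (u ++ v)) = phi (F u ++ v) := by
  obtain ⟨n, F, hF⟩ := hf
  refine ⟨n + 1, extendRule n F, fun u hu v huv => ⟨?_, ?_⟩⟩
  · exact inL_extendRule_append F (by lia) huv
  · exact (hF.extend 1).apply_phi_append hu v

/-- The action of Thompson's group `V` on the language `L` is veelike: for every `f ∈ V`
there are `n` and a local rule `F` on words of length `n` such that `f · (u ++ v) = F u ++ v`
whenever `|u| = n` and `u ++ v ∈ L`.  (Since `φ` is a bijection from `L` onto `X₀`,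
`f · w = w'` for `w, w' ∈ L` is expressed as `f (φ w) = φ w'` with `w' ∈ L`.) -/
theorem V_action_veelike (f : C ≃ₜ C) (hf : IsVElem f) :
    ∃ (n : ℕ) (F : List Bool → List Bool),
      ∀ u : List Bool, u.length = n → ∀ v : List Bool, InL (u ++ v) →
        InL (F u ++ v) ∧ f (phi (u ++ v)) = phi (F u ++ v) :=
  V_action_veelike_general hf
end

section
/- The set of self-homeomorphisms of C admitting a prefix local rule is a subgroup of the homeomorphism group of C: it contains the identity, and if f and g each admit a prefix local rule then so do f ∘ g and f⁻¹. -/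
/- A rule reading `n` letters determines the image of every cylinder of depth at least `n`, which is
what makes rules compose. For the inverse, only finitely many words `F u` occur because the alphabet
is finite. If `v` is at least as long as all of them and `x` is arbitrary, then the preimage of
`v ++ x` begins with some `u` of length `n`, so `v` begins with `F u`, say `v = F u ++ t`; hence the
inverse replaces `v` by `u ++ t`. -/

open Stream'

section Words

variable {α : Type*}

theorem isPrefix_of_append_stream_eq {u v : List α} {x y : Stream' α} (h : u ++ₛ x = v ++ₛ y)
    (hlen : u.length ≤ v.length) : u <+: v := by
  have htake : u = v.take u.length := calc
    u = (u ++ₛ x).take u.length := by rw [take_append_of_le_length _ _ _ le_rfl, List.take_length]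
    _ = (v ++ₛ y).take u.length := by rw [h]
    _ = v.take u.length := take_append_of_le_length _ _ _ hlen
  exact List.prefix_iff_eq_take.mpr htake

theorem exists_forall_length_le [Finite α] {β : Type*} (n : ℕ) (F : List α → List β) :
    ∃ N, ∀ u : List α, u.length = n → (F u).length ≤ N := by
  obtain ⟨N, hN⟩ := ((List.finite_length_eq α n).image fun u => (F u).length).bddAbove
  exact ⟨N, fun u hu => hN ⟨u, hu, rfl⟩⟩

/-- The map `f` replaces the prefix `u` by `w`: it carries the cylinder of `u` onto the cylinder of
`w` by `u ++ x ↦ w ++ x`. -/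
def ReplacesPrefix (f : Stream' α → Stream' α) (u w : List α) : Prop :=
  ∀ x, f (u ++ₛ x) = w ++ₛ x

/-- The map `f` admits a prefix local rule `F` reading `n` letters. This is `IsVElem` for arbitrary
maps and alphabets; elements of `ℕ → α` are encoded as streams. -/
def HasPrefixRule (f : Stream' α → Stream' α) : Prop :=
  ∃ (n : ℕ) (F : List α → List α), ∀ u, u.length = n → ReplacesPrefix f u (F u)

namespace ReplacesPrefix

variable {f g : Stream' α → Stream' α} {u v w : List α}

theorem append_right (h : ReplacesPrefix f u w) (t : List α) :
    ReplacesPrefix f (u ++ t) (w ++ t) := fun x => by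
  rw [append_append_stream, h, append_append_stream]

theorem of_take {n : ℕ} (h : ReplacesPrefix f (u.take n) w) :
    ReplacesPrefix f u (w ++ u.drop n) := by
  simpa only [List.take_append_drop] using h.append_right (u.drop n)

theorem comp (hf : ReplacesPrefix f v w) (hg : ReplacesPrefix g u v) :
    ReplacesPrefix (f ∘ g) u w := fun x => by
  rw [Function.comp_apply, hg, hf]

theorem of_leftInverse (h : ReplacesPrefix f u w) (hgf : Function.LeftInverse g f) :
    ReplacesPrefix g w u := fun x => by
  rw [← h, hgf]

end ReplacesPrefix

theorem hasPrefixRule_iff_forall_le_length {f : Stream' α → Stream' α} :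
    HasPrefixRule f ↔ ∃ n : ℕ, ∀ u : List α, n ≤ u.length → ∃ w, ReplacesPrefix f u w := by
  constructor
  · rintro ⟨n, F, hF⟩
    exact ⟨n, fun u hu => ⟨_, (hF (u.take n) (List.length_take_of_le hu)).of_take⟩⟩
  · rintro ⟨n, h⟩
    choose! F hF using h
    exact ⟨n, F, fun u hu => hF u hu.ge⟩

namespace HasPrefixRule

variable {f g : Stream' α → Stream' α}

protected theorem id : HasPrefixRule (id : Stream' α → Stream' α) :=
  ⟨0, id, fun _ _ _ => rfl⟩

protected theorem comp (hf : HasPrefixRule f) (hg : HasPrefixRule g) : HasPrefixRule (f ∘ g) := by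
  obtain ⟨n, hn⟩ := hasPrefixRule_iff_forall_le_length.mp hf
  obtain ⟨m, G, hG⟩ := hg
  refine hasPrefixRule_iff_forall_le_length.mpr ⟨m + n, fun u hu => ?_⟩
  have hgu : ReplacesPrefix g u (G (u.take m) ++ u.drop m) :=
    (hG (u.take m) (List.length_take_of_le (by lia))).of_take
  have hlen : n ≤ (G (u.take m) ++ u.drop m).length := by
    rw [List.length_append, List.length_drop]
    lia
  obtain ⟨w, hw⟩ := hn _ hlen
  exact ⟨w, hw.comp hgu⟩

protected theorem symm [Finite α] {e : Equiv.Perm (Stream' α)} (he : HasPrefixRule e) :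
    HasPrefixRule e.symm := by
  obtain ⟨n, F, hF⟩ := he
  obtain ⟨N, hN⟩ := exists_forall_length_le n F
  refine hasPrefixRule_iff_forall_le_length.mpr ⟨N, fun v hv => ?_⟩
  obtain _ | ⟨⟨x⟩⟩ := isEmpty_or_nonempty (Stream' α)
  · exact ⟨[], isEmptyElim⟩
  let y := e.symm (v ++ₛ x)
  let u := y.take n
  have hu : u.length = n := length_take n y
  have himage : F u ++ₛ y.drop n = v ++ₛ x := by
    rw [← hF u hu, append_take_drop, Equiv.apply_symm_apply]
  obtain ⟨t, ht⟩ : F u <+: v := isPrefix_of_append_stream_eq himage ((hN u hu).trans hv)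
  have hcylinder : ReplacesPrefix e (u ++ t) v := ht ▸ (hF u hu).append_right t
  exact ⟨u ++ t, hcylinder.of_leftInverse e.left_inv⟩

end HasPrefixRule

theorem V_is_subgroup_general (α : Type*) [Finite α] :
    HasPrefixRule (id : Stream' α → Stream' α) ∧
    (∀ f g : Stream' α → Stream' α, HasPrefixRule f → HasPrefixRule g → HasPrefixRule (f ∘ g)) ∧
    (∀ e : Equiv.Perm (Stream' α), HasPrefixRule e → HasPrefixRule e.symm) :=
  ⟨.id, fun _ _ => .comp, fun _ => .symm⟩

end Words

theorem wordApp_eq_appendStream' : wordApp = appendStream' (α := Bool) := by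
  funext u x i
  obtain hi | hi := lt_or_ge i u.length
  · exact (List.getD_eq_getElem _ _ hi).trans (get_append_left _ _ _ hi).symm
  · obtain ⟨k, rfl⟩ := Nat.exists_eq_add_of_le hi
    calc wordApp u x (u.length + k)
      _ = x (u.length + k - u.length) := List.getD_eq_default _ _ hi
      _ = x k := by rw [Nat.add_sub_cancel_left]
      _ = (u ++ₛ x).get (u.length + k) := (get_append_right k u x).symm

theorem isVElem_iff_hasPrefixRule (f : C ≃ₜ C) : IsVElem f ↔ HasPrefixRule (α := Bool) f := by
  rw [IsVElem, wordApp_eq_appendStream']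
  rfl

/-- The self-homeomorphisms of Cantor space admitting a prefix local rule form a
subgroup of the homeomorphism group: the identity admits one, and if `f` and `g` do,
then so do `f ∘ g` (which is `g.trans f`) and `f⁻¹`. -/
theorem V_is_subgroup :
    IsVElem (Homeomorph.refl C) ∧
    (∀ f g : C ≃ₜ C, IsVElem f → IsVElem g → IsVElem (g.trans f)) ∧
    (∀ f : C ≃ₜ C, IsVElem f → IsVElem f.symm) := by
  simp only [isVElem_iff_hasPrefixRule]
  obtain ⟨hid, hcomp, hsymm⟩ := V_is_subgroup_general Bool
  exact ⟨hid, fun f g => hcomp f g, fun f => hsymm f.toEquiv⟩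
end

section
/- Let g : L → L be the bijection that swaps the empty word with the one-letter word 1 and fixes every other word of L. Then (a) g satisfies the veelike condition: there exists n ∈ ℕ such that for every binary word u of length n there is a binary word u' with g(u ++ v) = u' ++ v for every v with u ++ v ∈ L; and (b) g is not induced by any element of Thompson's group V, i.e. there is no f ∈ V with f · w = g(w) for all w ∈ L. In particular, the embedding of V into the group of veelike bijections of L is not surjective. -/
/-- The bijection of `L` swapping the empty word with the one-letter word `1`
and fixing every other word. -/
def gswap (w : List Bool) : List Bool :=
  if w = [] then [true] else if w = [true] then [] else w

/-!
The points `φ(w)` with `w` outside a given finite set are still dense in Cantor space, since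
`φ(x₀ ⋯ x_{k-1} 1) → x`. So if a continuous map `f` induces a map `g` moving only finitely many
words of `L`, then `f` agrees with the identity on a dense set, whence `f = id` and `g` moves
nothing. The veelike condition, on the other hand, only sees words of length at least `n`, and
holds for every such `g`.
-/

open Filter Topology

/-- The veelike condition on a map `g` of words, which constrains `g` only on `L`: on the words
extending a given prefix `u` of a fixed length `n`, `g` replaces `u` by some `u'`. -/
def IsVeelike (g : List Bool → List Bool) : Prop :=
  ∃ n : ℕ, ∀ u : List Bool, u.length = n → ∃ u' : List Bool,
    ∀ v : List Bool, InL (u ++ v) → g (u ++ v) = u' ++ v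

/-- The words of `L` moved by `g`: its support, as a map of `L`. -/
def movedWords (g : List Bool → List Bool) : Set (List Bool) :=
  {w | InL w ∧ g w ≠ w}

/-- The first `k` digits of `x`, followed by a digit 1 that makes the word an element of `L`. -/
def truncation (x : C) (k : ℕ) : List Bool :=
  (List.range k).map x ++ [true]

theorem inL_truncation (x : C) (k : ℕ) : InL (truncation x k) :=
  Or.inr ⟨_, rfl⟩

theorem truncation_injective (x : C) : Function.Injective (truncation x) := by
  intro k l h
  simpa [truncation] using congrArg List.length h

theorem phi_apply (w : List Bool) (i : ℕ) : phi w i = w.getD i false := by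
  by_cases hi : i < w.length <;> simp [phi, wordApp, hi]

theorem phi_truncation_apply_of_lt (x : C) {i k : ℕ} (hik : i < k) :
    phi (truncation x k) i = x i := by
  simp [phi_apply, truncation, List.getElem?_append, hik]

theorem tendsto_phi_truncation (x : C) :
    Tendsto (fun k => phi (truncation x k)) atTop (𝓝 x) := by
  refine tendsto_pi_nhds.2 fun i => EventuallyEq.tendsto ?_
  filter_upwards [eventually_gt_atTop i] with k hik
  exact phi_truncation_apply_of_lt x hik

theorem length_le_of_phi_eq {w w' : List Bool} (hw' : InL w') (h : phi w = phi w') :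
    w'.length ≤ w.length := by
  obtain rfl | ⟨v, rfl⟩ := hw'
  · simp
  · by_contra! hlt
    have hv : w.length ≤ v.length := by simpa [Nat.lt_succ_iff] using hlt
    simpa [phi_apply, hv] using congrFun h v.length

theorem phi_injOn : Set.InjOn phi {w | InL w} := by
  intro w hw w' hw' h
  have hlen : w.length = w'.length :=
    (length_le_of_phi_eq hw h.symm).antisymm (length_le_of_phi_eq hw' h)
  refine List.ext_getElem hlen fun i hi hi' => ?_
  simpa [phi_apply, hi, hi'] using congrFun h i

section FiniteSupport

variable {g : List Bool → List Bool}

theorem IsVeelike.of_finite_movedWords (hfin : (movedWords g).Finite) : IsVeelike g := by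
  obtain ⟨N, hN⟩ := (hfin.image List.length).bddAbove
  refine ⟨N + 1, fun u hu => ⟨u, fun v huv => ?_⟩⟩
  by_contra hmoved
  have hle : (u ++ v).length ≤ N := hN ⟨u ++ v, ⟨huv, hmoved⟩, rfl⟩
  grind

theorem eventually_map_truncation_eq (hfin : (movedWords g).Finite) (x : C) :
    ∀ᶠ k in atTop, g (truncation x k) = truncation x k := by
  rw [← Nat.cofinite_eq_atTop]
  filter_upwards [(truncation_injective x).tendsto_cofinite.eventually
    hfin.eventually_cofinite_notMem] with k hk
  by_contra hmoved
  exact hk ⟨inL_truncation x k, hmoved⟩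

theorem eq_id_of_continuous_of_finite_movedWords (hfin : (movedWords g).Finite)
    {f : C → C} (hf : Continuous f) (hfg : ∀ w, InL w → f (phi w) = phi (g w)) : f = id := by
  funext x
  have hlim : Tendsto (fun k => f (phi (truncation x k))) atTop (𝓝 (f x)) :=
    (hf.tendsto x).comp (tendsto_phi_truncation x)
  refine tendsto_nhds_unique hlim ((tendsto_phi_truncation x).congr' ?_)
  filter_upwards [eventually_map_truncation_eq hfin x] with k hk
  rw [hfg _ (inL_truncation x k), hk]

theorem gswap_veelike_not_from_V_general (hmaps : Set.MapsTo g {w | InL w} {w | InL w})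
    (hfin : (movedWords g).Finite) (hne : (movedWords g).Nonempty) :
    IsVeelike g ∧
      ¬ ∃ f : C → C, Continuous f ∧ ∀ w : List Bool, InL w → f (phi w) = phi (g w) := by
  refine ⟨.of_finite_movedWords hfin, ?_⟩
  rintro ⟨f, hf, hfg⟩
  obtain ⟨w, hw, hmoved⟩ := hne
  obtain rfl : f = id := eq_id_of_continuous_of_finite_movedWords hfin hf hfg
  exact hmoved (phi_injOn (hmaps hw) hw (hfg w hw).symm)

end FiniteSupport

theorem gswap_involutive : Function.Involutive gswap := by
  intro w
  grind [gswap]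

theorem mapsTo_gswap : Set.MapsTo gswap {w | InL w} {w | InL w} := by
  intro w hw
  change InL (gswap w)
  unfold gswap
  split_ifs
  · exact Or.inr ⟨[], rfl⟩
  · exact Or.inl rfl
  · exact hw

theorem bijOn_gswap : Set.BijOn gswap {w | InL w} {w | InL w} :=
  Set.InvOn.bijOn ⟨fun w _ => gswap_involutive w, fun w _ => gswap_involutive w⟩
    mapsTo_gswap mapsTo_gswap

theorem finite_movedWords_gswap : (movedWords gswap).Finite := by
  refine (Set.toFinite {[], [true]}).subset ?_
  rintro w ⟨-, hmoved⟩
  by_contra hw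
  grind [gswap]

theorem nil_mem_movedWords_gswap : [] ∈ movedWords gswap :=
  ⟨Or.inl rfl, by simp [gswap]⟩

/-- `gswap` is a bijection of `L` onto itself which satisfies the veelike condition
(there is `n` such that for every word `u` of length `n` there is `u'` with
`g (u ++ v) = u' ++ v` whenever `u ++ v ∈ L`), but it is not induced by any element
of Thompson's group `V` (there is no `f ∈ V` with `f · w = g w` for all `w ∈ L`,
i.e. with `f (φ w) = φ (g w)` for all `w ∈ L`).  In particular the embedding of `V`
into the veelike group of `L` is not surjective. -/
theorem gswap_veelike_not_from_V :
    Set.BijOn gswap {w : List Bool | InL w} {w : List Bool | InL w} ∧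
    (∃ n : ℕ, ∀ u : List Bool, u.length = n → ∃ u' : List Bool,
      ∀ v : List Bool, InL (u ++ v) → gswap (u ++ v) = u' ++ v) ∧
    ¬ ∃ f : C ≃ₜ C, IsVElem f ∧ ∀ w : List Bool, InL w → f (phi w) = phi (gswap w) := by
  obtain ⟨hveelike, hnot⟩ := gswap_veelike_not_from_V_general mapsTo_gswap
    finite_movedWords_gswap ⟨[], nil_mem_movedWords_gswap⟩
  exact ⟨bijOn_gswap, hveelike, fun ⟨f, _, hf⟩ => hnot ⟨f, f.continuous, hf⟩⟩
end

section
/- Let X := {x : ℤ → Fin 3 | for no i ∈ ℤ, x i = 0 and x (i+1) = 2} (the subshift of finite type over {0,1,2} with unique forbidden word 02). Let Y be the set of x : ℤ → Fin 3 such that the set S := {i | x i = 2} is unbounded above and unbounded below, and for every pair of consecutive elements i < j of S, the word x(i+1) x(i+2) ⋯ x(j−1) uses only the symbols 0 and 1 and is either empty or ends in 1. Then the topological closure of Y in the product topology on (Fin 3)^ℤ is exactly X. In other words, X is the smallest subshift containing all bi-infinite concatenations ⋯ w₋₁ 2 w₀ 2 w₁ 2 ⋯ with each wᵢ in L. -/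
/-- The SFT over the alphabet `{0,1,2}` with unique forbidden word `02`. -/
def X3 : Set (ℤ → Fin 3) := {x | ∀ i : ℤ, ¬ (x i = 0 ∧ x (i + 1) = 2)}

/-- Configurations that are bi-infinite concatenations `⋯ w₋₁ 2 w₀ 2 w₁ 2 ⋯` with each
`wᵢ ∈ L`: the set `{i | x i = 2}` of separators is unbounded above and below, and the
word strictly between any two consecutive separators uses only the symbols `0, 1` and is
either empty or ends in `1`. -/
def Y3 : Set (ℤ → Fin 3) := {x |
  (∀ n : ℤ, ∃ i : ℤ, n < i ∧ x i = 2) ∧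
  (∀ n : ℤ, ∃ i : ℤ, i < n ∧ x i = 2) ∧
  (∀ i j : ℤ, x i = 2 → x j = 2 → i < j → (∀ k : ℤ, i < k → k < j → x k ≠ 2) →
    (∀ k : ℤ, i < k → k < j → x k = 0 ∨ x k = 1) ∧ (j = i + 1 ∨ x (j - 1) = 1))}

/-!
Since the left neighbour of a `2` is never `0` in `X3`, and every word of `L` that is not empty ends
in `1`, the set `Y3` consists of the points of `X3` in which `2` occurs infinitely often in both
directions. Such points are dense in `X3`: any symbol may follow `2`, and `1` may follow any symbol
and precede `2`, so every finite window of a point of `X3` can be completed to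
`⋯ 2 2 x(m) ⋯ x(n) 1 2 2 ⋯` without creating the word `02`.
-/

open Set Filter Function

theorem mem_closure_of_forall_Icc_eqOn {ι : Type*} [Preorder ι] [IsDirectedOrder ι]
    [IsCodirectedOrder ι] [Nonempty ι] {X : ι → Type*} [∀ i, TopologicalSpace (X i)]
    {S : Set (∀ i, X i)} {x : ∀ i, X i}
    (h : ∀ m n, ∃ y ∈ S, ∀ i ∈ Icc m n, y i = x i) : x ∈ closure S := by
  refine mem_closure_iff.2 fun U hU hxU => ?_
  obtain ⟨I, u, hu, hIU⟩ := isOpen_pi_iff.1 hU x hxU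
  obtain ⟨m, hm⟩ := I.finite_toSet.bddBelow
  obtain ⟨n, hn⟩ := I.finite_toSet.bddAbove
  obtain ⟨y, hyS, hyx⟩ := h m n
  refine ⟨y, hIU fun i hi => ?_, hyS⟩
  rw [hyx i ⟨hm hi, hn hi⟩]
  exact (hu i hi).2

theorem exists_last_lt_of_frequently_atBot {P : ℤ → Prop} (hP : ∃ᶠ k in atBot, P k) (i : ℤ) :
    ∃ j < i, P j ∧ ∀ k, j < k → k < i → ¬P k := by
  obtain ⟨j, ⟨hji, hj⟩, hmax⟩ := Int.exists_greatest_of_bdd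
    (P := fun j => j < i ∧ P j) ⟨i, fun _ hk => hk.1.le⟩ (frequently_atBot'.1 hP i)
  exact ⟨j, hji, hj, fun k hjk hki hk => hjk.not_ge (hmax k ⟨hki, hk⟩)⟩

section MarkovShift

variable {A : Type*}

/-- The vertex shift (topological Markov chain) over `A` with transition relation `R`: the
bi-infinite sequences all of whose steps are allowed by `R`. -/
def markovShift (R : A → A → Prop) : Set (ℤ → A) := {x | ∀ i, R (x i) (x (i + 1))}

/-- The configurations in which the symbol `s` occurs infinitely often in both directions. -/
def biRecurrent (s : A) : Set (ℤ → A) :=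
  {x | (∃ᶠ i in atTop, x i = s) ∧ ∃ᶠ i in atBot, x i = s}

variable {R : A → A → Prop} {s c : A}

theorem isClosed_markovShift [TopologicalSpace A] [DiscreteTopology A] (R : A → A → Prop) :
    IsClosed (markovShift R) := by
  simp only [markovShift, ofPred_forall]
  refine isClosed_iInter fun i => ?_
  have hpair : Continuous fun x : ℤ → A => (x i, x (i + 1)) := by fun_prop
  exact (isClosed_discrete {p : A × A | R p.1 p.2}).preimage hpair

theorem const_mem_markovShift (h : R s s) : const ℤ s ∈ markovShift R := fun _ => h

theorem piecewise_Iic_mem_markovShift {x y : ℤ → A} {n : ℤ} (hx : x ∈ markovShift R)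
    (hy : y ∈ markovShift R) (hxy : R (x n) (y (n + 1))) :
    (Iic n).piecewise x y ∈ markovShift R := by
  intro i
  rcases lt_trichotomy i n with hi | rfl | hi
  · simpa [piecewise, hi.le, Int.add_one_le_iff.2 hi] using hx i
  · simpa [piecewise] using hxy
  · simpa [piecewise, hi.not_ge, (hi.trans (lt_add_one i)).not_ge] using hy i

/-- The configuration `⋯ s s x(m) ⋯ x(n) c s s ⋯`, for `m ≤ n`. -/
noncomputable def padWindow (s c : A) (x : ℤ → A) (m n : ℤ) : ℤ → A :=
  (Iic (m - 1)).piecewise (const ℤ s)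
    ((Iic n).piecewise x ((Iic (n + 1)).piecewise (const ℤ c) (const ℤ s)))

theorem padWindow_of_mem_Icc {x : ℤ → A} {m n i : ℤ} (hi : i ∈ Icc m n) :
    padWindow s c x m n i = x i := by
  simp [padWindow, piecewise, hi.1.not_gt, hi.2]

theorem padWindow_mem_markovShift (hs : ∀ a, R s a) (hc : ∀ a, R a c) (hcs : R c s) {x : ℤ → A}
    (hx : x ∈ markovShift R) (m n : ℤ) : padWindow s c x m n ∈ markovShift R := by
  have hright : (Iic (n + 1)).piecewise (const ℤ c) (const ℤ s) ∈ markovShift R :=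
    piecewise_Iic_mem_markovShift (const_mem_markovShift (hc c)) (const_mem_markovShift (hs s)) hcs
  have hmid : (Iic n).piecewise x ((Iic (n + 1)).piecewise (const ℤ c) (const ℤ s)) ∈
      markovShift R :=
    piecewise_Iic_mem_markovShift hx hright (by simpa [piecewise] using hc (x n))
  exact piecewise_Iic_mem_markovShift (const_mem_markovShift (hs s)) hmid (hs _)

theorem padWindow_mem_biRecurrent (s c : A) (x : ℤ → A) (m n : ℤ) :
    padWindow s c x m n ∈ biRecurrent s := by
  constructor
  · refine Eventually.frequently ?_
    filter_upwards [eventually_gt_atTop (n + 1)] with i hi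
    simp [padWindow, piecewise, hi.not_ge, ((lt_add_one n).trans hi).not_ge]
  · refine Eventually.frequently ?_
    filter_upwards [eventually_le_atBot (m - 1)] with i hi
    exact piecewise_eq_of_mem _ _ _ hi

theorem closure_markovShift_inter_biRecurrent [TopologicalSpace A] [DiscreteTopology A]
    (hs : ∀ a, R s a) (hc : ∀ a, R a c) (hcs : R c s) :
    closure (markovShift R ∩ biRecurrent s) = markovShift R := by
  refine (closure_minimal inter_subset_left (isClosed_markovShift R)).antisymm fun x hx => ?_
  exact mem_closure_of_forall_Icc_eqOn fun m n => ⟨padWindow s c x m n,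
    ⟨padWindow_mem_markovShift hs hc hcs hx m n, padWindow_mem_biRecurrent s c x m n⟩,
    fun _ => padWindow_of_mem_Icc⟩

end MarkovShift

theorem X3_eq_markovShift : X3 = markovShift fun a b => ¬(a = 0 ∧ b = 2) := rfl

theorem Y3_subset_biRecurrent : Y3 ⊆ biRecurrent 2 := fun _ ⟨habove, hbelow, _⟩ =>
  ⟨frequently_atTop'.2 habove, frequently_atBot'.2 hbelow⟩

theorem Y3_subset_X3 : Y3 ⊆ X3 := by
  rintro x hx i ⟨hi, hi'⟩
  obtain ⟨j, hji, hj, hgap⟩ :=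
    exists_last_lt_of_frequently_atBot (Y3_subset_biRecurrent hx).2 (i + 1)
  rcases (hx.2.2 j (i + 1) hj hi' hji hgap).2 with hij | hi1
  · obtain rfl : i = j := by omega
    simp [hi] at hj
  · simp [hi] at hi1

theorem X3_inter_biRecurrent_subset_Y3 : X3 ∩ biRecurrent 2 ⊆ Y3 := by
  rintro x ⟨hx, habove, hbelow⟩
  refine ⟨frequently_atTop'.1 habove, frequently_atBot'.1 hbelow, fun i j _ hj hij hgap => ?_⟩
  have eq_zero_or_one : ∀ a : Fin 3, a ≠ 2 → a = 0 ∨ a = 1 := by decide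
  refine ⟨fun k hik hkj => eq_zero_or_one _ (hgap k hik hkj), or_iff_not_imp_left.2 fun hne => ?_⟩
  have hlast_ne_zero : x (j - 1) ≠ 0 := fun h0 => hx (j - 1) ⟨h0, by rwa [sub_add_cancel]⟩
  exact (eq_zero_or_one _ (hgap (j - 1) (by omega) (by omega))).resolve_left hlast_ne_zero

theorem Y3_eq_X3_inter_biRecurrent : Y3 = X3 ∩ biRecurrent 2 :=
  (subset_inter Y3_subset_X3 Y3_subset_biRecurrent).antisymm X3_inter_biRecurrent_subset_Y3

/-- The closure of `Y3` in the product topology on `(Fin 3)^ℤ` is exactly `X3`: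
`X3` is the smallest subshift containing all bi-infinite concatenations
`⋯ w₋₁ 2 w₀ 2 w₁ 2 ⋯` with each `wᵢ ∈ L`. -/
theorem closure_Y3_eq_X3 : closure Y3 = X3 := by
  rw [Y3_eq_X3_inter_biRecurrent, X3_eq_markovShift]
  exact closure_markovShift_inter_biRecurrent (c := 1) (by decide) (by decide) (by decide)
end

section
/- Identify Fin 6 with the alphabet (0_A, 1_A, @, 0_B, 1_B, #) in this order, and let M be the 6×6 zero-one matrix with rows [1,1,1,0,0,0], [1,1,1,0,0,0], [0,0,0,1,1,1], [0,0,0,1,1,0], [0,0,0,1,1,1], [0,1,1,0,0,0]. Let X' := {x : ℤ → Fin 6 | ∀ i, M (x i) (x (i+1)) = 1}. The shift map σ restricted to X' is topologically mixing: for all nonempty open subsets U, V of X' (in the subspace topology), there exists N ∈ ℕ such that for all n ≥ N, σ^n(U) ∩ V ≠ ∅. -/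
/-- The 6×6 zero-one transition matrix, rows and columns indexed by the alphabet
`(0_A, 1_A, @, 0_B, 1_B, #)` in this order. -/
def M6 : Fin 6 → Fin 6 → ℕ :=
  ![![1,1,1,0,0,0],
    ![1,1,1,0,0,0],
    ![0,0,0,1,1,1],
    ![0,0,0,1,1,0],
    ![0,0,0,1,1,1],
    ![0,1,1,0,0,0]]

/-- The vertex shift of `M6`. -/
def X6 : Set (ℤ → Fin 6) := {x | ∀ i : ℤ, M6 (x i) (x (i + 1)) = 1}

/-- The shift map `σ(x)(i) = x(i+1)` restricted to `X6` (with the subspace topology). -/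
def sigma6 : X6 → X6 := fun x => ⟨fun i => x.val (i + 1), fun i => x.prop (i + 1)⟩

/-!
If every symbol is joined to every symbol by a walk of exactly `m` steps, then two points `x`, `y`
of the vertex shift can be merged across any gap of length at least `m`: follow `x` up to `m`
steps before the gap ends, then take a walk of length `m` to the symbol of `y` at the end of the
gap, and follow `y` from there on. Open sets constrain only finitely many coordinates, so merging
a point of `U` with a far translate of a point of `V` gives mixing. For `M6` the length `m = 4`
works, that is, all entries of the fourth power of the matrix are positive.
-/

open Set

/-- Topological mixing of a self-map `f`: the images `f^n(U)` of a nonempty open set meet any given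
nonempty open set for all large `n`. In terms of preimages, `U ∩ f^(-n)(V)` is nonempty. -/
def IsTopologicallyMixing {X : Type*} [TopologicalSpace X] (f : X → X) : Prop :=
  ∀ U V : Set X, IsOpen U → IsOpen V → U.Nonempty → V.Nonempty →
    ∃ N : ℕ, ∀ n : ℕ, N ≤ n → (f^[n] '' U ∩ V).Nonempty

theorem exists_finset_forall_mem_of_isOpen {ι : Type*} {α : ι → Type*}
    [∀ i, TopologicalSpace (α i)] {S : Set (∀ i, α i)} {U : Set S} (hU : IsOpen U) {u : S}
    (hu : u ∈ U) : ∃ I : Finset ι, ∀ x : S, (∀ i ∈ I, x.1 i = u.1 i) → x ∈ U := by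
  obtain ⟨O, hO, rfl⟩ := isOpen_induced_iff.1 hU
  obtain ⟨I, w, hw, hwO⟩ := isOpen_pi_iff.1 hO u.1 hu
  refine ⟨I, fun x hx => hwO fun i hi => ?_⟩
  rw [hx i hi]
  exact (hw i hi).2

section VertexShift

variable {α : Type*} {r : α → α → Prop}

/-- The vertex shift of the directed graph with edge relation `r`, i.e. the space of bi-infinite
walks. A zero-one matrix `M` corresponds to the relation `M a b = 1`. -/
def vertexShift (r : α → α → Prop) : Set (ℤ → α) := {x | ∀ i : ℤ, r (x i) (x (i + 1))}

/-- The relation `r ^ m`: there is an `r`-walk with exactly `m` steps from `a` to `b`. It is defined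
by recursion on the first step, so that a walk can be built from its starting point onwards. -/
def HasWalk (r : α → α → Prop) : ℕ → α → α → Prop
  | 0, a, b => a = b
  | m + 1, a, b => ∃ c, r a c ∧ HasWalk r m c b

namespace vertexShift

/-- The left shift `σ(x)(i) = x(i + 1)` as a self-map of the vertex shift. -/
def shift (r : α → α → Prop) (x : vertexShift r) : vertexShift r :=
  ⟨fun i => x.1 (i + 1), fun i => x.2 (i + 1)⟩

theorem shift_iterate_apply (n : ℕ) (x : vertexShift r) (i : ℤ) :
    ((shift r)^[n] x).1 i = x.1 (i + n) := by
  induction n generalizing x with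
  | zero => simp
  | succ n ih =>
    rw [Function.iterate_succ_apply, ih, shift]
    push_cast
    rw [add_assoc]

theorem translate_mem {x : ℤ → α} (hx : x ∈ vertexShift r) (j : ℤ) :
    (fun i => x (i - j)) ∈ vertexShift r := fun i => by
  simpa only [add_sub_right_comm] using hx (i - j)

theorem exists_mem_eqOn_of_eq {x y : ℤ → α} {i : ℤ} (hx : ∀ t < i, r (x t) (x (t + 1)))
    (hy : ∀ t ≥ i, r (y t) (y (t + 1))) (hxy : x i = y i) :
    ∃ z ∈ vertexShift r, EqOn z x (Iic i) ∧ EqOn z y (Ici i) := by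
  let z : ℤ → α := fun t => if t ≤ i then x t else y t
  have hzx : EqOn z x (Iic i) := fun t ht => if_pos ht
  have hzy : EqOn z y (Ici i) := fun t (ht : i ≤ t) => by
    obtain rfl | hit := ht.eq_or_lt
    · exact (hzx self_mem_Iic).trans hxy
    · exact if_neg hit.not_ge
  refine ⟨z, fun t => ?_, hzx, hzy⟩
  obtain ht | ht := lt_or_ge t i
  · rw [hzx ht.le, hzx (show t + 1 ≤ i from ht)]
    exact hx t ht
  · rw [hzy ht, hzy (show i ≤ t + 1 by omega)]
    exact hy t ht

theorem exists_mem_eqOn_of_hasWalk {m : ℕ} {x y : ℤ → α} {i j : ℤ} (hij : i + m = j)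
    (hx : ∀ t < i, r (x t) (x (t + 1))) (hy : ∀ t ≥ j, r (y t) (y (t + 1)))
    (hwalk : HasWalk r m (x i) (y j)) :
    ∃ z ∈ vertexShift r, EqOn z x (Iic i) ∧ EqOn z y (Ici j) := by
  induction m generalizing x i with
  | zero =>
    obtain rfl : i = j := by simpa using hij
    exact exists_mem_eqOn_of_eq hx hy hwalk
  | succ m ih =>
    obtain ⟨c, hxc, hcy⟩ := hwalk
    let x' := Function.update x (i + 1) c
    have hx'x : EqOn x' x (Iic i) := fun t (ht : t ≤ i) =>
      Function.update_of_ne (by omega) c x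
    have hx'c : x' (i + 1) = c := Function.update_self (i + 1) c x
    have hx' : ∀ t < i + 1, r (x' t) (x' (t + 1)) := fun t ht => by
      obtain rfl | hti := (Int.lt_add_one_iff.1 ht).eq_or_lt
      · rwa [hx'x self_mem_Iic, hx'c]
      · rw [hx'x hti.le, hx'x (show t + 1 ≤ i from hti)]
        exact hx t hti
    obtain ⟨z, hz, hzx', hzy⟩ := ih (by push_cast at hij; omega) hx' (by rwa [hx'c])
    exact ⟨z, hz, (hzx'.mono (Iic_subset_Iic.2 (by omega))).trans hx'x, hzy⟩

theorem exists_mem_eqOn_Iic_Ici {m : ℕ} (hr : ∀ a b, HasWalk r m a b) {x y : ℤ → α}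
    (hx : x ∈ vertexShift r) (hy : y ∈ vertexShift r) {i j : ℤ} (hij : i + m ≤ j) :
    ∃ z ∈ vertexShift r, EqOn z x (Iic i) ∧ EqOn z y (Ici j) := by
  obtain ⟨z, hz, hzx, hzy⟩ := exists_mem_eqOn_of_hasWalk (sub_add_cancel j (m : ℤ))
    (fun t _ => hx t) (fun t _ => hy t) (hr _ _)
  exact ⟨z, hz, hzx.mono (Iic_subset_Iic.2 (le_sub_iff_add_le.2 hij)), hzy⟩

theorem isTopologicallyMixing_shift [TopologicalSpace α] {m : ℕ}
    (hr : ∀ a b, HasWalk r m a b) : IsTopologicallyMixing (shift r) := by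
  rintro U V hU hV ⟨u, hu⟩ ⟨v, hv⟩
  obtain ⟨I, hI⟩ := exists_finset_forall_mem_of_isOpen hU hu
  obtain ⟨J, hJ⟩ := exists_finset_forall_mem_of_isOpen hV hv
  obtain ⟨k, hk⟩ := I.bddAbove
  obtain ⟨l, hl⟩ := J.bddBelow
  refine ⟨(k + m - l).toNat, fun n hn => ?_⟩
  have hgap : k + m ≤ l + n := by omega
  obtain ⟨z, hz, hzu, hzv⟩ := exists_mem_eqOn_Iic_Ici hr u.2 (translate_mem v.2 n) hgap
  have hzU : ⟨z, hz⟩ ∈ U := hI _ fun i hi => hzu (hk hi)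
  have hzV : (shift r)^[n] ⟨z, hz⟩ ∈ V := hJ _ fun j hj =>
    calc ((shift r)^[n] ⟨z, hz⟩).1 j = z (j + n) := shift_iterate_apply n _ j
      _ = v.1 (j + n - n) := hzv (add_le_add_left (hl hj) (n : ℤ))
      _ = v.1 j := by rw [add_sub_cancel_right]
  exact ⟨_, mem_image_of_mem _ hzU, hzV⟩

end vertexShift

end VertexShift

theorem hasWalk_M6_four : ∀ a b : Fin 6, HasWalk (fun a b => M6 a b = 1) 4 a b := by
  simp only [HasWalk]
  decide

/-- The shift map restricted to the vertex shift `X6` is topologically mixing: for all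
nonempty open subsets `U, V` of `X6` there is `N` such that `σ^n(U) ∩ V ≠ ∅` for all
`n ≥ N`. -/
theorem X6_shift_mixing :
    ∀ U V : Set X6, IsOpen U → IsOpen V → U.Nonempty → V.Nonempty →
      ∃ N : ℕ, ∀ n : ℕ, N ≤ n → (sigma6^[n] '' U ∩ V).Nonempty :=
  vertexShift.isTopologicallyMixing_shift hasWalk_M6_four
end
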